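/- Let n ≥ 2, let Λ be an n-dimensional isotropic subspace of ℂ^{2n+1}, and let x ∈ 𝒫(Λ) be any point. Then the collection ℱ_x = {S admissible : x(S) = g_Λ(S)} is closed under the operations ∩ and ⊔: if S₁, S₂ ∈ ℱ_x then S₁ ∩ S₂ ∈ ℱ_x and S₁ ⊔ S₂ ∈ ℱ_x, where S₁ ⊔ S₂ := {a ∈ S₁ ∪ S₂ : ā ∉ S₁ ∪ S₂}. -/

import Mathlib

/-!
Both `x(S₁) + x(S₂) = x(S₁ ∩ S₂) + x(S₁ ⊔ S₂)` and
`g(S₁ ∩ S₂) + g(S₁ ⊔ S₂) ≤ g(S₁) + g(S₂)` hold for admissible sets, so equality in `x(S) ≤ g(S)`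
at `S₁` and `S₂` forces equality at `S₁ ∩ S₂` and `S₁ ⊔ S₂`.

For the inequality write `U = S₁ ∪ S₂`, `T = S₁ ⊔ S₂`, and let `C` be the set of `a ∈ S₁` with
`ā ∈ S₂`. Since the rank is submodular, it remains to gain `|C|` when passing from `T` to `U`:
`rk(T) + |C| ≤ rk(U)`. The set `A = T ∪ C ⊆ U` is admissible, so `G = H_A^⊥` is isotropic of
dimension `|T| + |C|`, and it is orthogonal to `N = Λ ∩ H_U`. Hence `N + G` is isotropic and
`dim N + |T| + |C| ≤ n + dim (N ∩ G)`. A vector of `N ∩ G` lies in `Λ ∩ H_T^⊥`, which is orthogonal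
to `Λ + H_T`; therefore `n + dim (N ∩ G) ≤ |T| + dim (Λ ∩ H_T)`.
-/

open scoped BigOperators

/-- Index set for the coordinates of `ℂ^{2n+1}`: `none` is the coordinate `0`,
`some (q, false)` is the coordinate `q+1 ∈ [n]`, and `some (q, true)` is the barred
coordinate `(q+1)̄ ∈ [n]̄`. -/
abbrev Idx (n : ℕ) := Option (Fin n × Bool)

/-- The nondegenerate symmetric bilinear form
`y·z = 2 y₀ z₀ + Σ_q (y_q z_{q̄} + y_{q̄} z_q)` on `ℂ^{2n+1}`. -/
noncomputable def bform (n : ℕ) (y z : Idx n → ℂ) : ℂ :=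
  2 * y none * z none +
    ∑ q : Fin n, (y (some (q, false)) * z (some (q, true)) +
      y (some (q, true)) * z (some (q, false)))

/-- A subspace is isotropic if the bilinear form vanishes identically on it. -/
def IsIsotropic (n : ℕ) (Λ : Submodule ℂ (Idx n → ℂ)) : Prop :=
  ∀ y ∈ Λ, ∀ z ∈ Λ, bform n y z = 0

/-- `H_S`: the coordinate subspace of vectors whose coordinates indexed by `S` vanish. -/
noncomputable def coordSub (n : ℕ) (S : Set (Idx n)) : Submodule ℂ (Idx n → ℂ) where
  carrier := {v | ∀ i ∈ S, v i = 0}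
  add_mem' := by
    intro a b ha hb i hi
    simp only [Pi.add_apply, ha i hi, hb i hi, add_zero]
  zero_mem' := by intro i hi; rfl
  smul_mem' := by
    intro c a ha i hi
    simp only [Pi.smul_apply, ha i hi, smul_zero]

/-- `rk_Λ(S) = n − dim(Λ ∩ H_S)`. -/
noncomputable def rk (n : ℕ) (Λ : Submodule ℂ (Idx n → ℂ)) (S : Set (Idx n)) : ℕ :=
  n - Module.finrank ℂ ↥(Λ ⊓ coordSub n S)

/-- The set of coordinates in `[n] ∪ [n]̄` corresponding to a finite set of pairs. -/
def finIdx (n : ℕ) (S : Finset (Fin n × Bool)) : Set (Idx n) :=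
  (fun p => (some p : Idx n)) '' ↑S

/-- A subset `S ⊆ [n] ∪ [n]̄` is admissible if it contains no pair `{q, q̄}`. -/
def Admissible (n : ℕ) (S : Finset (Fin n × Bool)) : Prop :=
  ∀ q : Fin n, ¬((q, false) ∈ S ∧ (q, true) ∈ S)

/-- `rk_Λ(S)` for `S ⊆ [n] ∪ [n]̄`. -/
noncomputable def rkF (n : ℕ) (Λ : Submodule ℂ (Idx n → ℂ)) (S : Finset (Fin n × Bool)) : ℕ :=
  rk n Λ (finIdx n S)

/-- `g_Λ(S) = rk_Λ(S) − |S ∩ [n]̄|`. -/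
noncomputable def gF (n : ℕ) (Λ : Submodule ℂ (Idx n → ℂ)) (S : Finset (Fin n × Bool)) : ℤ :=
  (rkF n Λ S : ℤ) - ((S.filter fun p => p.2 = true).card : ℤ)

/-- The delta-matroid `𝒟(Λ)`: maximal admissible subsets of full rank. -/
def deltaMatroid (n : ℕ) (Λ : Submodule ℂ (Idx n → ℂ)) : Set (Finset (Fin n × Bool)) :=
  {S | Admissible n S ∧ S.card = n ∧ rkF n Λ S = n}

/-- `x(S) = Σ_{q ∈ S ∩ [n]} x_q − Σ_{q̄ ∈ S ∩ [n]̄} x_q`. -/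
def xval (n : ℕ) (x : Fin n → ℝ) (S : Finset (Fin n × Bool)) : ℝ :=
  ∑ p ∈ S.filter (fun p => p.2 = false), x p.1 -
    ∑ p ∈ S.filter (fun p => p.2 = true), x p.1

/-- The polytope `𝒫(Λ)` cut out by the inequalities `x(S) ≤ g_Λ(S)` over admissible `S`. -/
def polytopeP (n : ℕ) (Λ : Submodule ℂ (Idx n → ℂ)) : Set (Fin n → ℝ) :=
  {x | ∀ S : Finset (Fin n × Bool), Admissible n S → xval n x S ≤ (gF n Λ S : ℝ)}

/-- `χ(S')`: the 0–1 vector whose `q`-th coordinate is `1` exactly when `q ∈ S' ∩ [n]`. -/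
def chi (n : ℕ) (S : Finset (Fin n × Bool)) : Fin n → ℝ :=
  fun q => if (q, false) ∈ S then 1 else 0

/-- `S₁ ⊔ S₂ = {a ∈ S₁ ∪ S₂ : ā ∉ S₁ ∪ S₂}`. -/
def sqcup (n : ℕ) (S₁ S₂ : Finset (Fin n × Bool)) : Finset (Fin n × Bool) :=
  (S₁ ∪ S₂).filter (fun p => (p.1, !p.2) ∉ S₁ ∪ S₂)

open Module

/-! ### Isotropic subspaces of bilinear spaces -/

section Orthogonal

variable {R E : Type*} [CommSemiring R] [AddCommMonoid E] [Module R E] {B : LinearMap.BilinForm R E}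

lemma le_orthogonal_comm (hB : B.IsRefl) {M N : Submodule R E} :
    M ≤ B.orthogonal N ↔ N ≤ B.orthogonal M :=
  ⟨fun h y hy x hx => hB y x (h hx y hy), fun h x hx y hy => hB x y (h hy x hx)⟩

lemma sup_le_orthogonal_sup (hB : B.IsRefl) {M N : Submodule R E} (hM : M ≤ B.orthogonal M)
    (hN : N ≤ B.orthogonal N) (hMN : M ≤ B.orthogonal N) :
    M ⊔ N ≤ B.orthogonal (M ⊔ N) :=
  sup_le ((le_orthogonal_comm hB).2 (sup_le hM ((le_orthogonal_comm hB).1 hMN)))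
    ((le_orthogonal_comm hB).2 (sup_le hMN hN))

end Orthogonal

section Finrank

variable {K V : Type*} [Field K] [AddCommGroup V] [Module K V] [FiniteDimensional K V]
  {B : LinearMap.BilinForm K V}

lemma finrank_add_finrank_orthogonal_eq (hB : B.Nondegenerate) (W : Submodule K V) :
    finrank K W + finrank K (B.orthogonal W) = finrank K V := by
  rw [LinearMap.BilinForm.finrank_orthogonal hB, Nat.add_sub_cancel' (Submodule.finrank_le W)]

lemma two_mul_finrank_le_of_le_orthogonal (hB : B.Nondegenerate) {W : Submodule K V}
    (hW : W ≤ B.orthogonal W) : 2 * finrank K W ≤ finrank K V := by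
  rw [← finrank_add_finrank_orthogonal_eq hB W, two_mul]
  exact Nat.add_le_add_left (Submodule.finrank_mono hW) _

lemma finrank_add_finrank_inf_orthogonal_le (hB : B.Nondegenerate) (hB' : B.IsRefl)
    {Λ : Submodule K V} (hΛ : Λ ≤ B.orthogonal Λ) (H : Submodule K V) :
    finrank K Λ + finrank K ↥(Λ ⊓ B.orthogonal H)
      ≤ finrank K (B.orthogonal H) + finrank K ↥(Λ ⊓ H) := by
  have hperp : Λ ⊓ B.orthogonal H ≤ B.orthogonal (Λ ⊔ H) :=
    (le_orthogonal_comm hB').2 <| sup_le ((le_orthogonal_comm hB').1 (inf_le_left.trans hΛ))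
      ((le_orthogonal_comm hB').1 inf_le_right)
  have hle := Submodule.finrank_mono hperp
  have hsup := finrank_add_finrank_orthogonal_eq hB (Λ ⊔ H)
  have hH := finrank_add_finrank_orthogonal_eq hB H
  have hdim := Submodule.finrank_sup_add_finrank_inf_eq Λ H
  omega

lemma finrank_inf_add_finrank_orthogonal_le (hB : B.Nondegenerate) (hB' : B.IsRefl)
    {Λ A T U : Submodule K V} (hΛ : Λ ≤ B.orthogonal Λ)
    (hmax : finrank K V ≤ 2 * finrank K Λ + 1) (hA : B.orthogonal A ≤ A) (hUA : U ≤ A)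
    (hT : U ⊓ B.orthogonal A ≤ B.orthogonal T) :
    finrank K ↥(Λ ⊓ U) + finrank K (B.orthogonal A)
      ≤ finrank K (B.orthogonal T) + finrank K ↥(Λ ⊓ T) := by
  have hAA : A ≤ B.orthogonal (B.orthogonal A) := LinearMap.BilinForm.le_orthogonal_orthogonal hB'
  have hN : Λ ⊓ U ≤ B.orthogonal (Λ ⊓ U) :=
    inf_le_left.trans (hΛ.trans (LinearMap.BilinForm.orthogonal_le inf_le_left))
  have hiso : (Λ ⊓ U) ⊔ B.orthogonal A ≤ B.orthogonal ((Λ ⊓ U) ⊔ B.orthogonal A) :=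
    sup_le_orthogonal_sup hB' hN (hA.trans hAA) (inf_le_right.trans (hUA.trans hAA))
  have hsup : finrank K ↥((Λ ⊓ U) ⊔ B.orthogonal A) ≤ finrank K Λ := by
    have := two_mul_finrank_le_of_le_orthogonal hB hiso
    omega
  have hinf : finrank K ↥((Λ ⊓ U) ⊓ B.orthogonal A) ≤ finrank K ↥(Λ ⊓ B.orthogonal T) :=
    Submodule.finrank_mono <| inf_assoc Λ U (B.orthogonal A) ▸ inf_le_inf_left Λ hT
  have hdim := Submodule.finrank_sup_add_finrank_inf_eq (Λ ⊓ U) (B.orthogonal A)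
  have hT' := finrank_add_finrank_inf_orthogonal_le hB hB' hΛ T
  omega

end Finrank

/-! ### The bilinear form and coordinate subspaces -/

/-- The involution `q ↔ q̄`, where `(q, false)` encodes `q` and `(q, true)` encodes `q̄`. -/
def bar {ι : Type*} (p : ι × Bool) : ι × Bool := (p.1, !p.2)

lemma bar_involutive {ι : Type*} : Function.Involutive (bar (ι := ι)) := fun p => by simp [bar]

section

variable {n : ℕ}

lemma bform_eq_sum (y z : Idx n → ℂ) :
    bform n y z = ∑ i : Idx n, i.elim 2 (fun _ => 1) * y i * z (i.map bar) := by
  simp only [bform, bar, Fintype.sum_option, Fintype.sum_prod_type, Fintype.sum_bool, Option.elim,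
    Option.map, one_mul, Bool.not_true, Bool.not_false, add_comm]

/-- The form `y·z` bundled as a `LinearMap.BilinForm`, which gives access to orthogonal
complements. -/
noncomputable def dotForm (n : ℕ) : LinearMap.BilinForm ℂ (Idx n → ℂ) :=
  LinearMap.mk₂ ℂ (bform n)
    (fun _ _ _ => by
      simp only [bform_eq_sum, Pi.add_apply, mul_add, add_mul, Finset.sum_add_distrib])
    (fun _ _ _ => by
      simp only [bform_eq_sum, Pi.smul_apply, smul_eq_mul, Finset.mul_sum, mul_left_comm,
        mul_assoc])
    (fun _ _ _ => by
      simp only [bform_eq_sum, Pi.add_apply, mul_add, Finset.sum_add_distrib])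
    (fun _ _ _ => by
      simp only [bform_eq_sum, Pi.smul_apply, smul_eq_mul, Finset.mul_sum, mul_left_comm])

lemma dotForm_apply (y z : Idx n → ℂ) :
    dotForm n y z = ∑ i : Idx n, i.elim 2 (fun _ => 1) * y i * z (i.map bar) :=
  bform_eq_sum y z

lemma isIsotropic_iff_le_orthogonal {Λ : Submodule ℂ (Idx n → ℂ)} :
    IsIsotropic n Λ ↔ Λ ≤ (dotForm n).orthogonal Λ :=
  ⟨fun h z hz y hy => h y hy z hz, fun h y hy _ hz => h hz y hy⟩

lemma dotForm_isRefl : (dotForm n).IsRefl := by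
  have hcomm (y z : Idx n → ℂ) : bform n y z = bform n z y := by
    simp only [bform, mul_comm, mul_left_comm, add_comm]
  exact fun y z h => (hcomm z y).trans h

lemma mem_coordSub {S : Set (Idx n)} {v : Idx n → ℂ} : v ∈ coordSub n S ↔ ∀ i ∈ S, v i = 0 :=
  Iff.rfl

lemma mem_orthogonal_coordSub {S : Set (Idx n)} {v : Idx n → ℂ} :
    v ∈ (dotForm n).orthogonal (coordSub n S) ↔ ∀ i ∉ S, v (i.map bar) = 0 := by
  constructor
  · intro hv i hi
    have hsingle : Pi.single i 1 ∈ coordSub n S := fun j hj =>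
      Pi.single_eq_of_ne (ne_of_mem_of_not_mem hj hi) 1
    have h : dotForm n (Pi.single i 1) v = 0 := hv _ hsingle
    rw [dotForm_apply, Finset.sum_eq_single i (fun j _ hj => by simp [hj]) (by simp)] at h
    cases i <;> simpa using h
  · intro hv y hy
    refine (dotForm_apply y v).trans (Finset.sum_eq_zero fun i _ => ?_)
    by_cases hi : i ∈ S
    · rw [hy i hi, mul_zero, zero_mul]
    · rw [hv i hi, mul_zero]

lemma dotForm_nondegenerate : (dotForm n).Nondegenerate := by
  refine dotForm_isRefl.nondegenerate_iff_separatingRight.2 fun v hv => ?_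
  have hv' : ∀ i, v (Option.map bar i) = 0 := fun i =>
    mem_orthogonal_coordSub.1 (fun y _ => hv y) i (Set.notMem_empty i)
  funext i
  simpa [bar_involutive.comp_self] using hv' (i.map bar)

lemma finrank_idx_fun : finrank ℂ (Idx n → ℂ) = 2 * n + 1 := by
  simp [mul_comm]

lemma finrank_coordSub_add_ncard (S : Set (Idx n)) :
    finrank ℂ (coordSub n S) + S.ncard = 2 * n + 1 := by
  classical
  let restrict := LinearMap.funLeft ℂ ℂ (Subtype.val : S → Idx n)
  have hker : restrict.ker = coordSub n S := by
    ext v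
    simp [restrict, mem_coordSub, funext_iff]
  have hrange : restrict.range = ⊤ := LinearMap.range_eq_top.2 <|
    LinearMap.funLeft_surjective_of_injective ℂ ℂ _ Subtype.val_injective
  have h := restrict.finrank_range_add_finrank_ker
  rwa [hker, hrange, finrank_top, finrank_fintype_fun_eq_card, finrank_idx_fun,
    ← Nat.card_eq_fintype_card, Nat.card_coe_set_eq, add_comm] at h

lemma finrank_orthogonal_coordSub_finIdx (S : Finset (Fin n × Bool)) :
    finrank ℂ ((dotForm n).orthogonal (coordSub n (finIdx n S))) = S.card := by
  have hncard : (finIdx n S).ncard = S.card := by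
    rw [finIdx, Set.ncard_image_of_injective _ (Option.some_injective _), Set.ncard_coe_finset]
  have hS := finrank_coordSub_add_ncard (finIdx n S)
  have hperp := finrank_add_finrank_orthogonal_eq dotForm_nondegenerate (coordSub n (finIdx n S))
  rw [finrank_idx_fun] at hperp
  omega

lemma coordSub_anti {S T : Set (Idx n)} (h : S ⊆ T) : coordSub n T ≤ coordSub n S :=
  fun _ hv i hi => hv i (h hi)

lemma coordSub_union (S T : Set (Idx n)) : coordSub n (S ∪ T) = coordSub n S ⊓ coordSub n T := by
  ext v
  simp only [Submodule.mem_inf, mem_coordSub, Set.mem_union, or_imp, forall_and]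

lemma finIdx_mono {S T : Finset (Fin n × Bool)} (h : S ⊆ T) : finIdx n S ⊆ finIdx n T :=
  Set.image_mono (Finset.coe_subset.2 h)

lemma some_mem_finIdx {S : Finset (Fin n × Bool)} {p : Fin n × Bool} :
    some p ∈ finIdx n S ↔ p ∈ S :=
  (Option.some_injective _).mem_set_image

/-! ### Admissible sets -/

/-- The elements `a ∈ S₁` with `ā ∈ S₂`. For admissible `S₁` and `S₂` there is exactly one of these
for each `q` such that `S₁ ∪ S₂` contains both `q` and `q̄`. -/
def clash (S₁ S₂ : Finset (Fin n × Bool)) : Finset (Fin n × Bool) :=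
  S₁.filter fun p => bar p ∈ S₂

variable {S₁ S₂ : Finset (Fin n × Bool)}

lemma mem_sqcup {p : Fin n × Bool} :
    p ∈ sqcup n S₁ S₂ ↔ p ∈ S₁ ∪ S₂ ∧ bar p ∉ S₁ ∪ S₂ :=
  Finset.mem_filter

lemma mem_clash {p : Fin n × Bool} : p ∈ clash S₁ S₂ ↔ p ∈ S₁ ∧ bar p ∈ S₂ :=
  Finset.mem_filter

lemma admissible_iff_bar_notMem {S : Finset (Fin n × Bool)} :
    Admissible n S ↔ ∀ p ∈ S, bar p ∉ S := by
  refine ⟨?_, fun h q hq => h _ hq.1 hq.2⟩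
  rintro h ⟨q, b⟩ hp hbar
  cases b
  · exact h q ⟨hp, hbar⟩
  · exact h q ⟨hbar, hp⟩

lemma Admissible.mono {S T : Finset (Fin n × Bool)} (hT : Admissible n T) (h : S ⊆ T) :
    Admissible n S :=
  fun q hq => hT q ⟨h hq.1, h hq.2⟩

lemma admissible_sqcup (S₁ S₂ : Finset (Fin n × Bool)) : Admissible n (sqcup n S₁ S₂) :=
  admissible_iff_bar_notMem.2 fun _ hp hbar => (mem_sqcup.1 hp).2 (mem_sqcup.1 hbar).1

lemma sqcup_union_clash_subset (S₁ S₂ : Finset (Fin n × Bool)) :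
    sqcup n S₁ S₂ ∪ clash S₁ S₂ ⊆ S₁ ∪ S₂ :=
  Finset.union_subset (Finset.filter_subset _ _)
    ((Finset.filter_subset _ _).trans Finset.subset_union_left)

lemma disjoint_sqcup_clash (S₁ S₂ : Finset (Fin n × Bool)) :
    Disjoint (sqcup n S₁ S₂) (clash S₁ S₂) :=
  Finset.disjoint_left.2 fun _ hT hC =>
    (mem_sqcup.1 hT).2 (Finset.mem_union_right S₁ (mem_clash.1 hC).2)

lemma Admissible.sqcup_union_clash (h₁ : Admissible n S₁) :
    Admissible n (sqcup n S₁ S₂ ∪ clash S₁ S₂) := by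
  rw [admissible_iff_bar_notMem] at h₁ ⊢
  intro p hp hbar
  rcases Finset.mem_union.1 hp with hpT | hpC
  · exact (mem_sqcup.1 hpT).2 (sqcup_union_clash_subset S₁ S₂ hbar)
  rcases Finset.mem_union.1 hbar with hbarT | hbarC
  · refine (mem_sqcup.1 hbarT).2 ?_
    rw [bar_involutive p]
    exact sqcup_union_clash_subset S₁ S₂ hp
  · exact h₁ p (mem_clash.1 hpC).1 (mem_clash.1 hbarC).1

lemma filter_bar_mem_union (h₁ : Admissible n S₁) (h₂ : Admissible n S₂) :
    (S₁ ∪ S₂).filter (fun p => ¬ bar p ∉ S₁ ∪ S₂) = clash S₁ S₂ ∪ (clash S₁ S₂).image bar := by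
  have himage (p : Fin n × Bool) : p ∈ (clash S₁ S₂).image bar ↔ bar p ∈ S₁ ∧ p ∈ S₂ := by
    rw [← bar_involutive p, bar_involutive.injective.mem_finset_image, mem_clash, bar_involutive p]
  ext p
  have hp₁ := admissible_iff_bar_notMem.1 h₁ p
  have hp₂ := admissible_iff_bar_notMem.1 h₂ p
  simp only [Finset.mem_filter, Finset.mem_union, mem_clash, himage]
  tauto

lemma disjoint_clash_image_bar (h₁ : Admissible n S₁) :
    Disjoint (clash S₁ S₂) ((clash S₁ S₂).image bar) := by
  refine Finset.disjoint_right.2 fun _ himage hC => ?_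
  obtain ⟨p, hp, rfl⟩ := Finset.mem_image.1 himage
  exact admissible_iff_bar_notMem.1 h₁ p (mem_clash.1 hp).1 (mem_clash.1 hC).1

lemma sum_inter_add_sum_sqcup_add_sum_clash {M : Type*} [AddCommMonoid M]
    (h₁ : Admissible n S₁) (h₂ : Admissible n S₂) (f : Fin n × Bool → M) :
    ∑ p ∈ S₁ ∩ S₂, f p + ∑ p ∈ sqcup n S₁ S₂, f p + ∑ p ∈ clash S₁ S₂, (f p + f (bar p))
      = ∑ p ∈ S₁, f p + ∑ p ∈ S₂, f p := by
  have hclash : ∑ p ∈ S₁ ∪ S₂ with ¬ bar p ∉ S₁ ∪ S₂, f p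
      = ∑ p ∈ clash S₁ S₂, (f p + f (bar p)) := by
    rw [filter_bar_mem_union h₁ h₂, Finset.sum_union (disjoint_clash_image_bar h₁),
      Finset.sum_image bar_involutive.injective.injOn, Finset.sum_add_distrib]
  have hunion : ∑ p ∈ sqcup n S₁ S₂, f p + ∑ p ∈ clash S₁ S₂, (f p + f (bar p))
      = ∑ p ∈ S₁ ∪ S₂, f p :=
    hclash ▸ Finset.sum_filter_add_sum_filter_not (S₁ ∪ S₂) (fun p => bar p ∉ S₁ ∪ S₂) f
  rw [add_assoc, hunion, add_comm, Finset.sum_union_inter]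

lemma card_barred_inter_add_card_barred_sqcup_add_card_clash
    (h₁ : Admissible n S₁) (h₂ : Admissible n S₂) :
    ((S₁ ∩ S₂).filter fun p => p.2 = true).card + ((sqcup n S₁ S₂).filter fun p => p.2 = true).card
      + (clash S₁ S₂).card
      = (S₁.filter fun p => p.2 = true).card + (S₂.filter fun p => p.2 = true).card := by
  have hpair (p : Fin n × Bool) :
      ((if p.2 = true then 1 else 0) + if (bar p).2 = true then 1 else 0) = 1 := by
    obtain ⟨q, b⟩ := p
    cases b <;> rfl
  have h := sum_inter_add_sum_sqcup_add_sum_clash h₁ h₂ fun p => if p.2 = true then 1 else 0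
  simpa only [hpair, ← Finset.card_filter, ← Finset.card_eq_sum_ones] using h

lemma xval_eq_sum (x : Fin n → ℝ) (S : Finset (Fin n × Bool)) :
    xval n x S = ∑ p ∈ S, if p.2 = true then -x p.1 else x p.1 := by
  simp only [xval, Finset.sum_ite, Finset.sum_neg_distrib, Bool.not_eq_true]
  ring

lemma xval_inter_add_xval_sqcup (x : Fin n → ℝ) (h₁ : Admissible n S₁) (h₂ : Admissible n S₂) :
    xval n x (S₁ ∩ S₂) + xval n x (sqcup n S₁ S₂) = xval n x S₁ + xval n x S₂ := by
  have hpair (p : Fin n × Bool) : ((if p.2 = true then -x p.1 else x p.1)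
      + if (bar p).2 = true then -x (bar p).1 else x (bar p).1) = 0 := by
    obtain ⟨q, b⟩ := p
    cases b <;> simp [bar]
  simpa only [← xval_eq_sum, hpair, Finset.sum_const_zero, add_zero] using
    sum_inter_add_sum_sqcup_add_sum_clash h₁ h₂ fun p => if p.2 = true then -x p.1 else x p.1

/-! ### Bisubmodularity -/

variable {Λ : Submodule ℂ (Idx n → ℂ)}

lemma rk_add_finrank (hΛ : finrank ℂ Λ ≤ n) (S : Set (Idx n)) :
    rk n Λ S + finrank ℂ ↥(Λ ⊓ coordSub n S) = n :=
  Nat.sub_add_cancel ((Submodule.finrank_mono inf_le_left).trans hΛ)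

lemma rk_inter_add_rk_union_le (hΛ : finrank ℂ Λ ≤ n) (S T : Set (Idx n)) :
    rk n Λ (S ∩ T) + rk n Λ (S ∪ T) ≤ rk n Λ S + rk n Λ T := by
  have hsup : (Λ ⊓ coordSub n S) ⊔ (Λ ⊓ coordSub n T) ≤ Λ ⊓ coordSub n (S ∩ T) :=
    sup_le (inf_le_inf_left Λ (coordSub_anti Set.inter_subset_left))
      (inf_le_inf_left Λ (coordSub_anti Set.inter_subset_right))
  have hinf : (Λ ⊓ coordSub n S) ⊓ (Λ ⊓ coordSub n T) = Λ ⊓ coordSub n (S ∪ T) := by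
    rw [coordSub_union, ← inf_inf_distrib_left]
  have hdim := Submodule.finrank_sup_add_finrank_inf_eq (Λ ⊓ coordSub n S) (Λ ⊓ coordSub n T)
  rw [hinf] at hdim
  have hle := Submodule.finrank_mono hsup
  have hS := rk_add_finrank hΛ S
  have hT := rk_add_finrank hΛ T
  have hinter := rk_add_finrank hΛ (S ∩ T)
  have hunion := rk_add_finrank hΛ (S ∪ T)
  omega

lemma orthogonal_coordSub_le_of_admissible {A : Finset (Fin n × Bool)} (hA : Admissible n A) :
    (dotForm n).orthogonal (coordSub n (finIdx n A)) ≤ coordSub n (finIdx n A) := by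
  rintro v hv _ ⟨p, hp, rfl⟩
  have h := mem_orthogonal_coordSub.1 hv (some (bar p))
    (mt some_mem_finIdx.1 (admissible_iff_bar_notMem.1 hA p hp))
  rwa [Option.map_some, bar_involutive p] at h

lemma coordSub_union_inf_orthogonal_le (S₁ S₂ : Finset (Fin n × Bool)) :
    coordSub n (finIdx n (S₁ ∪ S₂))
        ⊓ (dotForm n).orthogonal (coordSub n (finIdx n (sqcup n S₁ S₂ ∪ clash S₁ S₂)))
      ≤ (dotForm n).orthogonal (coordSub n (finIdx n (sqcup n S₁ S₂))) := by
  rintro v ⟨hvU, hvA⟩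
  rw [SetLike.mem_coe, mem_orthogonal_coordSub] at hvA
  refine mem_orthogonal_coordSub.2 fun i hi => ?_
  by_cases hiA : i ∈ finIdx n (sqcup n S₁ S₂ ∪ clash S₁ S₂)
  · obtain ⟨p, hp, rfl⟩ := hiA
    have hpC : p ∈ clash S₁ S₂ :=
      (Finset.mem_union.1 hp).resolve_left (mt some_mem_finIdx.2 hi)
    exact hvU _ (some_mem_finIdx.2 (Finset.mem_union_right S₁ (mem_clash.1 hpC).2))
  · exact hvA i hiA

lemma rkF_sqcup_add_card_clash_le (hiso : IsIsotropic n Λ) (hΛ : finrank ℂ Λ = n)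
    (h₁ : Admissible n S₁) :
    rkF n Λ (sqcup n S₁ S₂) + (clash S₁ S₂).card ≤ rkF n Λ (S₁ ∪ S₂) := by
  have hmax : finrank ℂ (Idx n → ℂ) ≤ 2 * finrank ℂ Λ + 1 := by rw [finrank_idx_fun, hΛ]
  have hle := finrank_inf_add_finrank_orthogonal_le dotForm_nondegenerate dotForm_isRefl
    (isIsotropic_iff_le_orthogonal.1 hiso) hmax
    (orthogonal_coordSub_le_of_admissible h₁.sqcup_union_clash)
    (coordSub_anti (finIdx_mono (sqcup_union_clash_subset S₁ S₂)))
    (coordSub_union_inf_orthogonal_le S₁ S₂)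
  rw [finrank_orthogonal_coordSub_finIdx, finrank_orthogonal_coordSub_finIdx,
    Finset.card_union_of_disjoint (disjoint_sqcup_clash S₁ S₂)] at hle
  have hT := rk_add_finrank hΛ.le (finIdx n (sqcup n S₁ S₂))
  have hU := rk_add_finrank hΛ.le (finIdx n (S₁ ∪ S₂))
  simp only [rkF]
  omega

lemma gF_inter_add_gF_sqcup_le (hiso : IsIsotropic n Λ) (hΛ : finrank ℂ Λ = n)
    (h₁ : Admissible n S₁) (h₂ : Admissible n S₂) :
    gF n Λ (S₁ ∩ S₂) + gF n Λ (sqcup n S₁ S₂) ≤ gF n Λ S₁ + gF n Λ S₂ := by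
  have hsub : rkF n Λ (S₁ ∩ S₂) + rkF n Λ (S₁ ∪ S₂) ≤ rkF n Λ S₁ + rkF n Λ S₂ := by
    have h := rk_inter_add_rk_union_le hΛ.le (finIdx n S₁) (finIdx n S₂)
    simpa only [rkF, finIdx, Finset.coe_inter, Finset.coe_union, Set.image_union,
      Set.image_inter (Option.some_injective _)] using h
  have hclash := rkF_sqcup_add_card_clash_le (S₂ := S₂) hiso hΛ h₁
  have hbarred := card_barred_inter_add_card_barred_sqcup_add_card_clash h₁ h₂
  simp only [gF]
  omega

end

theorem stmt9 (n : ℕ) (hn : 2 ≤ n)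
    (Λ : Submodule ℂ (Idx n → ℂ)) (hiso : IsIsotropic n Λ)
    (hΛ : Module.finrank ℂ ↥Λ = n)
    (x : Fin n → ℝ) (hx : x ∈ polytopeP n Λ)
    (S₁ S₂ : Finset (Fin n × Bool))
    (h₁ : Admissible n S₁ ∧ xval n x S₁ = (gF n Λ S₁ : ℝ))
    (h₂ : Admissible n S₂ ∧ xval n x S₂ = (gF n Λ S₂ : ℝ)) :
    (Admissible n (S₁ ∩ S₂) ∧ xval n x (S₁ ∩ S₂) = (gF n Λ (S₁ ∩ S₂) : ℝ)) ∧
      (Admissible n (sqcup n S₁ S₂) ∧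
        xval n x (sqcup n S₁ S₂) = (gF n Λ (sqcup n S₁ S₂) : ℝ)) := by
  obtain ⟨hS₁, htight₁⟩ := h₁
  obtain ⟨hS₂, htight₂⟩ := h₂
  have hinter : Admissible n (S₁ ∩ S₂) := hS₁.mono Finset.inter_subset_left
  have hsqcup : Admissible n (sqcup n S₁ S₂) := admissible_sqcup S₁ S₂
  have hx_inter := hx _ hinter
  have hx_sqcup := hx _ hsqcup
  have hmodular := xval_inter_add_xval_sqcup x hS₁ hS₂
  have hbisub : (gF n Λ (S₁ ∩ S₂) : ℝ) + gF n Λ (sqcup n S₁ S₂) ≤ gF n Λ S₁ + gF n Λ S₂ := by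
    exact_mod_cast gF_inter_add_gF_sqcup_le hiso hΛ hS₁ hS₂
  exact ⟨⟨hinter, by linarith⟩, ⟨hsqcup, by linarith⟩⟩
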